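/- Let λ > 0, N ∈ ℕ with N ≥ 1, and let z = (z[0], …, z[N]) ∈ ℝ^{N+1} be such that M_λ(z[0]) = z[0] and M_λ(z[N]) = z[N] (no folding occurs at the first and last sample). Set w[k] = M_λ(z[k]) for k = 0, …, N. Then for every n = 0, …, N−1, \hat{Δz}[n] = (e^{2πi n/N} − 1)·\tilde z[n] − e^{2πi n/N}·(w[0] − w[N]). -/

import Mathlib

open Complex Real

/-- The centered modulo operator `M_λ(t) = t − 2λ⌊(t+λ)/(2λ)⌋`. -/
noncomputable def centeredModulo (lam t : ℝ) : ℝ :=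
  t - 2 * lam * ⌊(t + lam) / (2 * lam)⌋

/-- **DDP with modulo boundary samples.**
Let `λ > 0` and `z ∈ ℝ^{N+1}` with no folding at the first and last samples,
i.e. `M_λ(z[0]) = z[0]` and `M_λ(z[N]) = z[N]`, and set `w[k] = M_λ(z[k])`.
Then for every `n = 0, …, N−1`,
`\hat{Δz}[n] = (e^{2πi n/N} − 1)·\tilde z[n] − e^{2πi n/N}·(w[0] − w[N])`. -/
theorem ddp_modulo_boundary
    (lam : ℝ) (hlam : 0 < lam)
    (N : ℕ) (hN : 1 ≤ N) (z : Fin (N + 1) → ℝ)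
    (h0 : centeredModulo lam (z 0) = z 0)
    (hNfold : centeredModulo lam (z (Fin.last N)) = z (Fin.last N))
    (w : Fin (N + 1) → ℝ) (hw : ∀ k, w k = centeredModulo lam (z k))
    (n : ℕ) (hn : n < N) :
    ∑ k : Fin N, ((z k.succ : ℂ) - (z k.castSucc : ℂ)) *
        Complex.exp (-2 * π * I * n * (k : ℕ) / N)
      = (Complex.exp (2 * π * I * n / N) - 1) *
          (∑ k : Fin N, (z k.castSucc : ℂ) *
            Complex.exp (-2 * π * I * n * (k : ℕ) / N))
        - Complex.exp (2 * π * I * n / N) * ((w 0 : ℂ) - (w (Fin.last N) : ℂ)) := by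
  have hN0 : (N : ℂ) ≠ 0 := by exact_mod_cast (by omega : N ≠ 0)
  rw [hw 0, hw (Fin.last N), h0, hNfold]
  set F : Fin (N + 1) → ℂ := fun k =>
    (z k : ℂ) * Complex.exp (-2 * π * I * n * (k : ℕ) / N) with hF
  have e1 := Fin.sum_univ_succ F
  have e2 := Fin.sum_univ_castSucc F
  have hF0 : F 0 = z 0 := by simp [hF]
  have hFl : F (Fin.last N) = z (Fin.last N) := by
    have h : Complex.exp (-2 * π * I * n * (N : ℕ) / N) = 1 := by
      rw [Complex.exp_eq_one_iff]
      refine ⟨-(n : ℤ), ?_⟩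
      push_cast
      field_simp
    simp only [hF, Fin.val_last, h, mul_one]
  have hs : ∀ k : Fin N, (z k.succ : ℂ) * Complex.exp (-2 * π * I * n * (k : ℕ) / N)
      = Complex.exp (2 * π * I * n / N) * F k.succ := by
    intro k
    simp only [hF, Fin.val_succ]
    rw [mul_left_comm, ← Complex.exp_add]
    congr 2
    push_cast
    field_simp
    ring
  have hc : ∀ k : Fin N, (z k.castSucc : ℂ) * Complex.exp (-2 * π * I * n * (k : ℕ) / N)
      = F k.castSucc := fun k => rfl
  simp only [sub_mul, Finset.sum_sub_distrib, hs, hc]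
  rw [← Finset.mul_sum]
  rw [hF0] at e1
  rw [hFl] at e2
  linear_combination Complex.exp (2 * π * I * n / N) * (e2 - e1)
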